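/- Let (q1,p1,q2,p2) be a rational solution of A5^(2)(α0,α1,α2,α3). Then one of the following holds: (1) none of q1, p1, q2, p2 has a pole at 0; (2) p1 has a simple pole at 0 and none of q1, q2, p2 has a pole at 0; (3) p2 has a simple pole at 0 and none of q1, p1, q2 has a pole at 0. -/

import Mathlib

open Filter Topology Polynomial

/-- Evaluation of a rational function with complex coefficients at a point,
using its reduced numerator and denominator. -/
noncomputable def evR (f : RatFunc ℂ) (t : ℂ) : ℂ := f.num.eval t / f.denom.eval t

/-- A rational function has no pole at `c` if its reduced denominator does not vanish at `c`. -/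
def NoPoleAt (f : RatFunc ℂ) (c : ℂ) : Prop := f.denom.eval c ≠ 0

/-- `(q1, p1, q2, p2)` is a rational solution of the Sasano system
`A5^(2)(α0, α1, α2, α3)` (the parameter `α2` does not occur in the equations):
the four differential equations hold at every point `t ∈ ℂ` which is not a pole
of any of `q1, p1, q2, p2`. -/
def IsSasanoSol (a0 a1 a3 : ℂ) (q1 p1 q2 p2 : RatFunc ℂ) : Prop :=
  ∀ t : ℂ, NoPoleAt q1 t → NoPoleAt p1 t → NoPoleAt q2 t → NoPoleAt p2 t →
    (t * deriv (evR q1) t =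
      2 * (evR q1 t) ^ 2 * evR p1 t - (evR q1 t) ^ 2 + (a0 + a1 + a3) * evR q1 t
        - t + 4 * t * evR p2 t + 2 * evR q1 t * evR q2 t * evR p2 t) ∧
    (t * deriv (evR p1) t =
      -2 * evR q1 t * (evR p1 t) ^ 2 + 2 * evR q1 t * evR p1 t
        - (a0 + a1 + a3) * evR p1 t + a0 - 2 * evR p1 t * evR q2 t * evR p2 t) ∧
    (t * deriv (evR q2) t =
      2 * (evR q2 t) ^ 2 * evR p2 t - (evR q2 t) ^ 2 + (a0 + a1 + a3) * evR q2 t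
        - t + 4 * t * evR p1 t + 2 * evR q1 t * evR p1 t * evR q2 t) ∧
    (t * deriv (evR p2) t =
      -2 * evR q2 t * (evR p2 t) ^ 2 + 2 * evR q2 t * evR p2 t
        - (a0 + a1 + a3) * evR p2 t + a1 - 2 * evR q1 t * evR p1 t * evR p2 t)

/-- A rational function has a simple pole at `c` with residue `r ≠ 0`
if `(t - c) * f t → r` as `t → c`. -/
def SimplePoleAt (f : RatFunc ℂ) (c : ℂ) : Prop :=
  ∃ r : ℂ, r ≠ 0 ∧ Tendsto (fun t => (t - c) * evR f t) (𝓝[≠] c) (𝓝 r)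

/-!
Write `θ = t d/dt`, `κ = α₀ + α₁ + α₃` and `S = q₁ p₁ + q₂ p₂`. If `f` has a pole at `0` and
`θ f = f X + b` with `b` finite there, then `X = θ f / f - b / f` tends to the order of `f`. At a
pole of `p₁` this makes `2 S + κ - 2 q₁` finite, and at a pole of `q₁` with `p₂` finite it makes
`2 S + κ - q₁` finite. Solved for `4 t p₂`, the equation of `q₁` then gives `t p₂` up to lower order
terms: if `q₁ → c` and `S → s`, then `4 t p₂ → -c (2 s + κ - c)`, so that `p₂` has at most a simple
pole; if `q₁` has a pole and `2 S + κ - a q₁` is finite, then `4 t p₂ ∼ (1 - a) q₁²`.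

Together with the symmetry exchanging the two indices, these relations exclude a common pole of
`p₁` and `p₂` and all poles of `q₁`, `q₂`, except for a pole of `q₂` at a pole of `p₁` with `p₂`
finite. In that case `q₁ → 0`, `p₂ → 0` and `q₁ p₁` is finite, so that
`θ (q₁ p₁) = q₁ (q₁ p₁) + (4 p₂ - 1) t p₁ + α₀ q₁` yields `t p₁ → 0`, whereas `q₂` requires
`4 t p₁ ∼ q₂²`.
-/

section MeromorphicOrder

variable {𝕜 : Type*} [NontriviallyNormedField 𝕜] {f : 𝕜 → 𝕜} {x : 𝕜}

theorem eventually_ne_zero_of_meromorphicOrderAt_neg {E : Type*} [NormedAddCommGroup E]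
    [NormedSpace 𝕜 E] {f : 𝕜 → E} (hord : meromorphicOrderAt f x < 0) :
    ∀ᶠ z in 𝓝[≠] x, f z ≠ 0 :=
  (meromorphicOrderAt_ne_top_iff_eventually_ne_zero
    (meromorphicAt_of_meromorphicOrderAt_ne_zero hord.ne)).1 hord.ne_top

theorem tendsto_inv_zero_of_meromorphicOrderAt_neg {𝕜' : Type*} [NormedField 𝕜']
    [NormedAlgebra 𝕜 𝕜'] {f : 𝕜 → 𝕜'} (hord : meromorphicOrderAt f x < 0) :
    Tendsto (fun z => (f z)⁻¹) (𝓝[≠] x) (𝓝 0) :=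
  tendsto_inv₀_cobounded.comp (tendsto_cobounded_of_meromorphicOrderAt_neg hord)

theorem tendsto_zero_of_tendsto_mul_of_meromorphicOrderAt_neg {𝕜' : Type*} [NormedField 𝕜']
    [NormedAlgebra 𝕜 𝕜'] {f g : 𝕜 → 𝕜'} {w : 𝕜'} (hord : meromorphicOrderAt g x < 0)
    (hw : Tendsto (fun z => f z * g z) (𝓝[≠] x) (𝓝 w)) : Tendsto f (𝓝[≠] x) (𝓝 0) := by
  have hlim := hw.mul (tendsto_inv_zero_of_meromorphicOrderAt_neg hord)
  rw [mul_zero] at hlim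
  refine hlim.congr' ?_
  filter_upwards [eventually_ne_zero_of_meromorphicOrderAt_neg hord] with z hz
  exact mul_inv_cancel_right₀ hz (f z)

theorem meromorphicOrderAt_sub_mul (hf : MeromorphicAt f x) :
    meromorphicOrderAt (fun z => (z - x) * f z) x = 1 + meromorphicOrderAt f x := by
  have hid : meromorphicOrderAt (fun z => z - x) x = 1 :=
    (meromorphicOrderAt_eq_int_iff (n := 1) (by fun_prop)).2
      ⟨fun _ => 1, analyticAt_const, one_ne_zero, by simp⟩
  rw [← hid]
  exact meromorphicOrderAt_mul (by fun_prop) hf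

theorem meromorphicOrderAt_eq_neg_one_iff (hf : MeromorphicAt f x) :
    meromorphicOrderAt f x = -1 ↔
      ∃ r ≠ 0, Tendsto (fun z => (z - x) * f z) (𝓝[≠] x) (𝓝 r) := by
  rw [tendsto_ne_zero_iff_meromorphicOrderAt_eq_zero (by fun_prop), meromorphicOrderAt_sub_mul hf]
  cases meromorphicOrderAt f x with
  | top => exact iff_of_false WithTop.top_ne_coe WithTop.top_ne_coe
  | coe n =>
    rw [show (-1 : WithTop ℤ) = ((-1 : ℤ) : WithTop ℤ) from rfl]
    norm_cast
    omega

theorem meromorphicOrderAt_eq_neg_one_of_tendsto {r : 𝕜} (hord : meromorphicOrderAt f x < 0)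
    (hr : Tendsto (fun z => (z - x) * f z) (𝓝[≠] x) (𝓝 r)) :
    meromorphicOrderAt f x = -1 := by
  have hf := meromorphicAt_of_meromorphicOrderAt_ne_zero hord.ne
  have hsub : 0 ≤ 1 + meromorphicOrderAt f x := by
    rw [← meromorphicOrderAt_sub_mul hf]
    exact (tendsto_nhds_iff_meromorphicOrderAt_nonneg (by fun_prop)).1 ⟨r, hr⟩
  lift meromorphicOrderAt f x to ℤ using hord.ne_top with n
  rw [show (-1 : WithTop ℤ) = ((-1 : ℤ) : WithTop ℤ) from rfl]
  norm_cast at hord hsub ⊢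
  omega

theorem ne_zero_of_tendsto_sub_mul {r : 𝕜} (hord : meromorphicOrderAt f x < 0)
    (hr : Tendsto (fun z => (z - x) * f z) (𝓝[≠] x) (𝓝 r)) : r ≠ 0 := by
  obtain ⟨s, hs, hlim⟩ := (meromorphicOrderAt_eq_neg_one_iff
    (meromorphicAt_of_meromorphicOrderAt_ne_zero hord.ne)).1
    (meromorphicOrderAt_eq_neg_one_of_tendsto hord hr)
  rwa [tendsto_nhds_unique hr hlim]

variable [CompleteSpace 𝕜]

theorem tendsto_sub_mul_deriv_zero (hf : MeromorphicAt f x) {y : 𝕜}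
    (hy : Tendsto f (𝓝[≠] x) (𝓝 y)) :
    Tendsto (fun z => (z - x) * deriv f z) (𝓝[≠] x) (𝓝 0) := by
  obtain ⟨g, hg, hfg⟩ := hf.meromorphicOrderAt_nonneg_iff.1
    ((tendsto_nhds_iff_meromorphicOrderAt_nonneg hf).1 ⟨y, hy⟩)
  have hlim : Tendsto (fun z => (z - x) * deriv g z) (𝓝 x) (𝓝 ((x - x) * deriv g x)) :=
    ((continuous_sub_right x).tendsto x).mul hg.deriv.continuousAt.tendsto
  rw [sub_self, zero_mul] at hlim
  refine (hlim.mono_left nhdsWithin_le_nhds).congr' ?_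
  filter_upwards [hfg.nhdsNE_deriv] with z hz
  rw [hz]

theorem tendsto_sub_mul_logDeriv (hf : MeromorphicAt f x)
    (hord : meromorphicOrderAt f x ≠ ⊤) :
    Tendsto (fun z => (z - x) * logDeriv f z) (𝓝[≠] x)
      (𝓝 (meromorphicOrderAt f x).untop₀) := by
  obtain ⟨g, hg, hgx, hfg⟩ := (meromorphicOrderAt_ne_top_iff hf).1 hord
  set n := (meromorphicOrderAt f x).untop₀
  have hg_lim : Tendsto g (𝓝[≠] x) (𝓝 (g x)) :=
    hg.continuousAt.tendsto.mono_left nhdsWithin_le_nhds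
  have hlim : Tendsto (fun z => n + (z - x) * deriv g z / g z) (𝓝[≠] x) (𝓝 (n + 0 / g x)) :=
    ((tendsto_sub_mul_deriv_zero hg.meromorphicAt hg_lim).div hg_lim hgx).const_add _
  rw [zero_div, add_zero] at hlim
  refine hlim.congr' ?_
  filter_upwards [logDeriv_congr_nhdsNE hfg,
    hg.eventually_analyticAt.filter_mono nhdsWithin_le_nhds,
    hg_lim.eventually_ne hgx,
    eventually_mem_nhdsWithin] with z hlog hgz hgz0 hzx
  have hzx : z - x ≠ 0 := sub_ne_zero.2 hzx
  have hpow : logDeriv (fun w => (w - x) ^ n) z = n / (z - x) := by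
    rw [logDeriv_fun_zpow (by fun_prop), logDeriv_apply]
    simp [div_eq_mul_inv]
  simp only [smul_eq_mul] at hlog
  rw [hlog, logDeriv_mul (f := fun w => (w - x) ^ n) z (zpow_ne_zero n hzx) hgz0
    (by fun_prop (disch := simp [hzx])) hgz.differentiableAt, hpow, logDeriv_apply]
  field_simp

theorem tendsto_of_sub_mul_deriv_eq {X b : 𝕜 → 𝕜} {d : 𝕜}
    (hord : meromorphicOrderAt f x < 0) (hb : Tendsto b (𝓝[≠] x) (𝓝 d))
    (heq : ∀ᶠ z in 𝓝[≠] x, (z - x) * deriv f z = f z * X z + b z) :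
    Tendsto X (𝓝[≠] x) (𝓝 (meromorphicOrderAt f x).untop₀) := by
  have hf := meromorphicAt_of_meromorphicOrderAt_ne_zero hord.ne
  have hlim := (tendsto_sub_mul_logDeriv hf hord.ne_top).sub
    (hb.mul (tendsto_inv_zero_of_meromorphicOrderAt_neg hord))
  rw [mul_zero, sub_zero] at hlim
  refine hlim.congr' ?_
  filter_upwards [heq, eventually_ne_zero_of_meromorphicOrderAt_neg hord] with z hz hfz
  rw [logDeriv_apply, mul_div_assoc', hz]
  field_simp
  ring

end MeromorphicOrder

/-- A quadruple of germs of meromorphic functions at `0` solving the Sasano system on a punctured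
neighbourhood of `0`. The coefficient `κ`, which is `α₀ + α₁ + α₃` in the paper, is a free parameter
here. -/
structure IsSasanoGerm {𝕜 : Type*} [NontriviallyNormedField 𝕜] (κ α₀ α₁ : 𝕜)
    (q₁ p₁ q₂ p₂ : 𝕜 → 𝕜) : Prop where
  meromorphicAt_q₁ : MeromorphicAt q₁ 0
  meromorphicAt_p₁ : MeromorphicAt p₁ 0
  meromorphicAt_q₂ : MeromorphicAt q₂ 0
  meromorphicAt_p₂ : MeromorphicAt p₂ 0
  eq_q₁ : ∀ᶠ t in 𝓝[≠] 0, t * deriv q₁ t =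
    2 * q₁ t ^ 2 * p₁ t - q₁ t ^ 2 + κ * q₁ t - t + 4 * t * p₂ t + 2 * q₁ t * q₂ t * p₂ t
  eq_p₁ : ∀ᶠ t in 𝓝[≠] 0, t * deriv p₁ t =
    -2 * q₁ t * p₁ t ^ 2 + 2 * q₁ t * p₁ t - κ * p₁ t + α₀ - 2 * p₁ t * q₂ t * p₂ t
  eq_q₂ : ∀ᶠ t in 𝓝[≠] 0, t * deriv q₂ t =
    2 * q₂ t ^ 2 * p₂ t - q₂ t ^ 2 + κ * q₂ t - t + 4 * t * p₁ t + 2 * q₁ t * p₁ t * q₂ t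
  eq_p₂ : ∀ᶠ t in 𝓝[≠] 0, t * deriv p₂ t =
    -2 * q₂ t * p₂ t ^ 2 + 2 * q₂ t * p₂ t - κ * p₂ t + α₁ - 2 * q₁ t * p₁ t * p₂ t

namespace IsSasanoGerm

variable {𝕜 : Type*} [NontriviallyNormedField 𝕜] {κ α₀ α₁ : 𝕜} {q₁ p₁ q₂ p₂ : 𝕜 → 𝕜}

theorem symm (h : IsSasanoGerm κ α₀ α₁ q₁ p₁ q₂ p₂) : IsSasanoGerm κ α₁ α₀ q₂ p₂ q₁ p₁ where
  meromorphicAt_q₁ := h.meromorphicAt_q₂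
  meromorphicAt_p₁ := h.meromorphicAt_p₂
  meromorphicAt_q₂ := h.meromorphicAt_q₁
  meromorphicAt_p₂ := h.meromorphicAt_p₁
  eq_q₁ := by filter_upwards [h.eq_q₂] with t ht; rw [ht]; ring
  eq_p₁ := by filter_upwards [h.eq_p₂] with t ht; rw [ht]; ring
  eq_q₂ := by filter_upwards [h.eq_q₁] with t ht; rw [ht]; ring
  eq_p₂ := by filter_upwards [h.eq_p₁] with t ht; rw [ht]; ring

variable [CompleteSpace 𝕜]

theorem tendsto_of_pole_p₁ (h : IsSasanoGerm κ α₀ α₁ q₁ p₁ q₂ p₂)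
    (hp₁ : meromorphicOrderAt p₁ 0 < 0) :
    Tendsto (fun t => 2 * (q₁ t * p₁ t + q₂ t * p₂ t) + κ - 2 * q₁ t) (𝓝[≠] 0)
      (𝓝 (-(meromorphicOrderAt p₁ 0).untop₀)) := by
  have hlim := tendsto_of_sub_mul_deriv_eq
    (X := fun t => -(2 * (q₁ t * p₁ t + q₂ t * p₂ t) + κ - 2 * q₁ t))
    hp₁ (tendsto_const_nhds (x := α₀)) (by
      filter_upwards [h.eq_p₁] with t ht
      rw [sub_zero, ht]
      ring)
  simpa only [neg_neg] using hlim.neg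

theorem exists_tendsto_sum_of_pole_p₁ [NeZero (2 : 𝕜)] (h : IsSasanoGerm κ α₀ α₁ q₁ p₁ q₂ p₂)
    (hp₁ : meromorphicOrderAt p₁ 0 < 0) {c : 𝕜} (hq₁ : Tendsto q₁ (𝓝[≠] 0) (𝓝 c)) :
    ∃ s, Tendsto (fun t => q₁ t * p₁ t + q₂ t * p₂ t) (𝓝[≠] 0) (𝓝 s) := by
  refine ⟨_, (((h.tendsto_of_pole_p₁ hp₁).sub_const κ).div_const 2).add hq₁ |>.congr fun t => ?_⟩
  field_simp
  ring

theorem tendsto_of_pole_q₁ (h : IsSasanoGerm κ α₀ α₁ q₁ p₁ q₂ p₂)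
    (hq₁ : meromorphicOrderAt q₁ 0 < 0) {y : 𝕜} (hp₂ : Tendsto p₂ (𝓝[≠] 0) (𝓝 y)) :
    Tendsto (fun t => 2 * (q₁ t * p₁ t + q₂ t * p₂ t) + κ - q₁ t) (𝓝[≠] 0)
      (𝓝 (meromorphicOrderAt q₁ 0).untop₀) := by
  have hid : Tendsto (fun t : 𝕜 => t) (𝓝[≠] 0) (𝓝 0) := nhdsWithin_le_nhds
  refine tendsto_of_sub_mul_deriv_eq hq₁ (hid.mul ((hp₂.const_mul 4).sub_const 1)) ?_
  filter_upwards [h.eq_q₁] with t ht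
  rw [sub_zero, ht]
  ring

theorem exists_tendsto_q₁_mul_p₁ (h : IsSasanoGerm κ α₀ α₁ q₁ p₁ q₂ p₂)
    {x y : 𝕜} (hp₁ : Tendsto p₁ (𝓝[≠] 0) (𝓝 x)) (hp₂ : Tendsto p₂ (𝓝[≠] 0) (𝓝 y)) :
    ∃ w, Tendsto (fun t => q₁ t * p₁ t) (𝓝[≠] 0) (𝓝 w) := by
  rcases lt_or_ge (meromorphicOrderAt q₁ 0) 0 with hq₁ | hq₁
  · have hθp₁ := tendsto_sub_mul_deriv_zero h.meromorphicAt_p₁ hp₁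
    refine ⟨_, ((hθp₁.add (hp₁.mul (h.tendsto_of_pole_q₁ hq₁ hp₂))).sub_const α₀).congr' ?_⟩
    filter_upwards [h.eq_p₁] with t ht
    rw [sub_zero, ht]
    ring
  · obtain ⟨c, hc⟩ := tendsto_nhds_of_meromorphicOrderAt_nonneg h.meromorphicAt_q₁ hq₁
    exact ⟨_, hc.mul hp₁⟩

theorem meromorphicOrderAt_q₁_nonneg (h : IsSasanoGerm κ α₀ α₁ q₁ p₁ q₂ p₂)
    (hp₁ : 0 ≤ meromorphicOrderAt p₁ 0) (hp₂ : 0 ≤ meromorphicOrderAt p₂ 0) :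
    0 ≤ meromorphicOrderAt q₁ 0 := by
  obtain ⟨x, hx⟩ := tendsto_nhds_of_meromorphicOrderAt_nonneg h.meromorphicAt_p₁ hp₁
  obtain ⟨y, hy⟩ := tendsto_nhds_of_meromorphicOrderAt_nonneg h.meromorphicAt_p₂ hp₂
  by_contra! hq₁
  obtain ⟨w₁, hw₁⟩ := h.exists_tendsto_q₁_mul_p₁ hx hy
  obtain ⟨w₂, hw₂⟩ := h.symm.exists_tendsto_q₁_mul_p₁ hy hx
  refine hq₁.not_ge ((tendsto_nhds_iff_meromorphicOrderAt_nonneg h.meromorphicAt_q₁).1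
    ⟨_, (((hw₁.add hw₂).const_mul 2).add_const κ).sub (h.tendsto_of_pole_q₁ hq₁ hy)
      |>.congr fun t => ?_⟩)
  ring

theorem tendsto_mul_p₂_div_q₁_sq (h : IsSasanoGerm κ α₀ α₁ q₁ p₁ q₂ p₂)
    (hq₁ : meromorphicOrderAt q₁ 0 < 0) {a L : 𝕜}
    (hL : Tendsto (fun t => 2 * (q₁ t * p₁ t + q₂ t * p₂ t) + κ - a * q₁ t) (𝓝[≠] 0) (𝓝 L)) :
    Tendsto (fun t => 4 * (t * p₂ t) * (q₁ t)⁻¹ ^ 2) (𝓝[≠] 0) (𝓝 (1 - a)) := by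
  have hid : Tendsto (fun t : 𝕜 => t) (𝓝[≠] 0) (𝓝 0) := nhdsWithin_le_nhds
  have hinv := tendsto_inv_zero_of_meromorphicOrderAt_neg hq₁
  have hlog := tendsto_sub_mul_logDeriv h.meromorphicAt_q₁ hq₁.ne_top
  have hlim := (((hlog.sub hL).mul hinv).add_const (1 - a)).add (hid.mul (hinv.pow 2))
  simp only [mul_zero, zero_mul, zero_add, add_zero] at hlim
  refine hlim.congr' ?_
  filter_upwards [h.eq_q₁, eventually_ne_zero_of_meromorphicOrderAt_neg hq₁] with t ht hq₁t
  rw [sub_zero, logDeriv_apply]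
  field_simp
  linear_combination ht

theorem tendsto_mul_p₂ [NeZero (2 : 𝕜)] (h : IsSasanoGerm κ α₀ α₁ q₁ p₁ q₂ p₂)
    {c s : 𝕜} (hq₁ : Tendsto q₁ (𝓝[≠] 0) (𝓝 c))
    (hs : Tendsto (fun t => q₁ t * p₁ t + q₂ t * p₂ t) (𝓝[≠] 0) (𝓝 s)) :
    Tendsto (fun t => t * p₂ t) (𝓝[≠] 0) (𝓝 (-(c * (2 * s + κ - c)) / 4)) := by
  have hid : Tendsto (fun t : 𝕜 => t) (𝓝[≠] 0) (𝓝 0) := nhdsWithin_le_nhds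
  have hθq₁ := tendsto_sub_mul_deriv_zero h.meromorphicAt_q₁ hq₁
  have hlim := (((hθq₁.add hid).sub
    (hq₁.mul (((hs.const_mul 2).add_const κ).sub hq₁))).div_const 4)
  rw [zero_add, zero_sub] at hlim
  refine hlim.congr' ?_
  have hfour : (4 : 𝕜) ≠ 0 := by
    rw [show (4 : 𝕜) = 2 * 2 by norm_num]
    exact mul_ne_zero two_ne_zero two_ne_zero
  filter_upwards [h.eq_q₁] with t ht
  rw [sub_zero]
  field_simp
  linear_combination ht


theorem tendsto_q₁_sub_q₂_of_poles [NeZero (2 : 𝕜)] (h : IsSasanoGerm κ α₀ α₁ q₁ p₁ q₂ p₂)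
    (hp₁ : meromorphicOrderAt p₁ 0 < 0) (hp₂ : meromorphicOrderAt p₂ 0 < 0) :
    Tendsto (fun t => q₁ t - q₂ t) (𝓝[≠] 0)
      (𝓝 (((meromorphicOrderAt p₁ 0).untop₀ - (meromorphicOrderAt p₂ 0).untop₀) / 2)) := by
  have hlim := ((h.symm.tendsto_of_pole_p₁ hp₂).sub (h.tendsto_of_pole_p₁ hp₁)).div_const 2
  rw [neg_sub_neg] at hlim
  refine hlim.congr fun t => ?_
  field_simp
  ring

theorem meromorphicOrderAt_q₂_neg_of_poles [NeZero (2 : 𝕜)]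
    (h : IsSasanoGerm κ α₀ α₁ q₁ p₁ q₂ p₂) (hp₁ : meromorphicOrderAt p₁ 0 < 0)
    (hp₂ : meromorphicOrderAt p₂ 0 < 0) (hq₁ : meromorphicOrderAt q₁ 0 < 0) :
    meromorphicOrderAt q₂ 0 < 0 := by
  by_contra! hq₂
  obtain ⟨d, hd⟩ := tendsto_nhds_of_meromorphicOrderAt_nonneg h.meromorphicAt_q₂ hq₂
  refine hq₁.not_ge ((tendsto_nhds_iff_meromorphicOrderAt_nonneg h.meromorphicAt_q₁).1
    ⟨_, ((h.tendsto_q₁_sub_q₂_of_poles hp₁ hp₂).add hd).congr fun t => ?_⟩)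
  ring

theorem tendsto_q₂_div_q₁_of_poles [NeZero (2 : 𝕜)] (h : IsSasanoGerm κ α₀ α₁ q₁ p₁ q₂ p₂)
    (hp₁ : meromorphicOrderAt p₁ 0 < 0) (hp₂ : meromorphicOrderAt p₂ 0 < 0)
    (hq₁ : meromorphicOrderAt q₁ 0 < 0) :
    Tendsto (fun t => q₂ t * (q₁ t)⁻¹) (𝓝[≠] 0) (𝓝 1) := by
  have hlim := ((h.tendsto_q₁_sub_q₂_of_poles hp₁ hp₂).mul
    (tendsto_inv_zero_of_meromorphicOrderAt_neg hq₁)).const_sub 1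
  rw [mul_zero, sub_zero] at hlim
  refine hlim.congr' ?_
  filter_upwards [eventually_ne_zero_of_meromorphicOrderAt_neg hq₁] with t hq₁t
  field_simp
  ring

theorem meromorphicOrderAt_q₁_nonneg_of_poles [NeZero (2 : 𝕜)]
    (h : IsSasanoGerm κ α₀ α₁ q₁ p₁ q₂ p₂) (hp₁ : meromorphicOrderAt p₁ 0 < 0)
    (hp₂ : meromorphicOrderAt p₂ 0 < 0) : 0 ≤ meromorphicOrderAt q₁ 0 := by
  by_contra! hq₁
  have hq₂ := h.meromorphicOrderAt_q₂_neg_of_poles hp₁ hp₂ hq₁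
  have hid : Tendsto (fun t : 𝕜 => t) (𝓝[≠] 0) (𝓝 0) := nhdsWithin_le_nhds
  have hinv := tendsto_inv_zero_of_meromorphicOrderAt_neg hq₁
  have hratio := h.tendsto_q₂_div_q₁_of_poles hp₁ hp₂ hq₁
  have hX := h.tendsto_of_pole_p₁ hp₁
  -- `4 * t * (q₁ * p₁ + q₂ * p₂) / q₁ ^ 3` tends to `-2` by the equations for `q₁` and `q₂`,
  -- but to `0` by the equation for `p₁`.
  have hneg := ((h.symm.tendsto_mul_p₂_div_q₁_sq hq₂ (h.symm.tendsto_of_pole_p₁ hp₂)).mul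
    (hratio.pow 2)).add (hratio.mul (h.tendsto_mul_p₂_div_q₁_sq hq₁ hX))
  have hzero := (hid.const_mul 2).mul
    (((hX.sub_const κ).mul (hinv.pow 3)).add ((hinv.pow 2).const_mul 2))
  have hlim := tendsto_nhds_unique_of_eventuallyEq hneg hzero (by
    filter_upwards [eventually_ne_zero_of_meromorphicOrderAt_neg hq₁,
      eventually_ne_zero_of_meromorphicOrderAt_neg hq₂] with t hq₁t hq₂t
    field_simp
    ring)
  exact two_ne_zero (α := 𝕜) (by linear_combination -hlim)

theorem meromorphicOrderAt_p₂_nonneg_of_pole_p₁ [NeZero (2 : 𝕜)]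
    (h : IsSasanoGerm κ α₀ α₁ q₁ p₁ q₂ p₂) (hp₁ : meromorphicOrderAt p₁ 0 < 0) :
    0 ≤ meromorphicOrderAt p₂ 0 := by
  by_contra! hp₂
  obtain ⟨c, hc⟩ := tendsto_nhds_of_meromorphicOrderAt_nonneg h.meromorphicAt_q₁
    (h.meromorphicOrderAt_q₁_nonneg_of_poles hp₁ hp₂)
  obtain ⟨d, hd⟩ := tendsto_nhds_of_meromorphicOrderAt_nonneg h.meromorphicAt_q₂
    (h.symm.meromorphicOrderAt_q₁_nonneg_of_poles hp₂ hp₁)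
  obtain ⟨s, hs⟩ := h.exists_tendsto_sum_of_pole_p₁ hp₁ hc
  have htp₂ := h.tendsto_mul_p₂ hc hs
  have htp₁ := h.symm.tendsto_mul_p₂ hd (by simpa only [add_comm] using hs)
  have hord₁ := meromorphicOrderAt_eq_neg_one_of_tendsto hp₁ (by simpa only [sub_zero] using htp₁)
  have hord₂ := meromorphicOrderAt_eq_neg_one_of_tendsto hp₂ (by simpa only [sub_zero] using htp₂)
  have hres := ne_zero_of_tendsto_sub_mul hp₂ (by simpa only [sub_zero] using htp₂)
  have hcd : c = d := by
    have := tendsto_nhds_unique (hc.sub hd) (h.tendsto_q₁_sub_q₂_of_poles hp₁ hp₂)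
    rwa [hord₁, hord₂, sub_self, zero_div, sub_eq_zero] at this
  have hid : Tendsto (fun t : 𝕜 => t) (𝓝[≠] 0) (𝓝 0) := nhdsWithin_le_nhds
  have htS := tendsto_nhds_unique ((hc.mul htp₁).add (hd.mul htp₂))
    ((hid.mul hs).congr fun t => by ring)
  rw [← hcd, zero_mul, ← two_mul, ← mul_assoc] at htS
  have hc₀ : c ≠ 0 := by
    rintro rfl
    simp at hres
  exact mul_ne_zero (mul_ne_zero two_ne_zero hc₀) hres htS

theorem meromorphicOrderAt_q₁_nonneg_of_pole_p₁ (h : IsSasanoGerm κ α₀ α₁ q₁ p₁ q₂ p₂)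
    (hp₁ : meromorphicOrderAt p₁ 0 < 0) (hp₂ : 0 ≤ meromorphicOrderAt p₂ 0) :
    0 ≤ meromorphicOrderAt q₁ 0 := by
  by_contra! hq₁
  obtain ⟨y, hy⟩ := tendsto_nhds_of_meromorphicOrderAt_nonneg h.meromorphicAt_p₂ hp₂
  have hid : Tendsto (fun t : 𝕜 => t) (𝓝[≠] 0) (𝓝 0) := nhdsWithin_le_nhds
  have hzero := ((hid.mul hy).const_mul 4).mul
    ((tendsto_inv_zero_of_meromorphicOrderAt_neg hq₁).pow 2)
  have := tendsto_nhds_unique hzero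
    (h.tendsto_mul_p₂_div_q₁_sq hq₁ (h.tendsto_of_pole_p₁ hp₁))
  norm_num at this

theorem exists_tendsto_q₂_mul_p₂_of_tendsto_sum [NeZero (2 : 𝕜)]
    (h : IsSasanoGerm κ α₀ α₁ q₁ p₁ q₂ p₂) {s y : 𝕜}
    (hs : Tendsto (fun t => q₁ t * p₁ t + q₂ t * p₂ t) (𝓝[≠] 0) (𝓝 s))
    (hp₂ : Tendsto p₂ (𝓝[≠] 0) (𝓝 y)) :
    ∃ v, Tendsto (fun t => q₂ t * p₂ t) (𝓝[≠] 0) (𝓝 v) := by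
  have hθp₂ := tendsto_sub_mul_deriv_zero h.meromorphicAt_p₂ hp₂
  refine ⟨_, (((hθp₂.sub_const α₁).add
    (hp₂.mul ((hs.const_mul 2).add_const κ))).div_const 2).congr' ?_⟩
  filter_upwards [h.eq_p₂] with t ht
  rw [sub_zero, ht]
  field_simp
  ring

theorem eq_deriv_q₁_mul_p₁ (h : IsSasanoGerm κ α₀ α₁ q₁ p₁ q₂ p₂) :
    ∀ᶠ t in 𝓝[≠] 0, t * deriv (fun u => q₁ u * p₁ u) t =
      q₁ t * (q₁ t * p₁ t) + (4 * p₂ t - 1) * (t * p₁ t) + α₀ * q₁ t := by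
  filter_upwards [h.eq_q₁, h.eq_p₁, h.meromorphicAt_q₁.eventually_analyticAt,
    h.meromorphicAt_p₁.eventually_analyticAt] with t hq₁ hp₁ hq₁t hp₁t
  rw [deriv_fun_mul hq₁t.differentiableAt hp₁t.differentiableAt]
  linear_combination p₁ t * hq₁ + q₁ t * hp₁

theorem tendsto_mul_p₁_zero (h : IsSasanoGerm κ α₀ α₁ q₁ p₁ q₂ p₂)
    (hp₁ : meromorphicOrderAt p₁ 0 < 0) (hp₂ : Tendsto p₂ (𝓝[≠] 0) (𝓝 0)) {w : 𝕜}
    (hw : Tendsto (fun t => q₁ t * p₁ t) (𝓝[≠] 0) (𝓝 w)) :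
    Tendsto (fun t => t * p₁ t) (𝓝[≠] 0) (𝓝 0) := by
  have hq₁ : Tendsto q₁ (𝓝[≠] 0) (𝓝 0) :=
    tendsto_zero_of_tendsto_mul_of_meromorphicOrderAt_neg hp₁ hw
  have hθ := tendsto_sub_mul_deriv_zero (h.meromorphicAt_q₁.fun_mul h.meromorphicAt_p₁) hw
  have hcoef : Tendsto (fun t => 4 * p₂ t - 1) (𝓝[≠] 0) (𝓝 (-1)) := by
    simpa using (hp₂.const_mul 4).sub_const 1
  have hlim := ((hθ.sub (hq₁.mul hw)).sub (hq₁.const_mul α₀)).mul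
    (hcoef.inv₀ (neg_ne_zero.2 one_ne_zero))
  simp only [zero_mul, mul_zero, sub_zero] at hlim
  refine hlim.congr' ?_
  filter_upwards [h.eq_deriv_q₁_mul_p₁,
    hcoef.eventually_ne (neg_ne_zero.2 one_ne_zero)] with t ht hne
  rw [ht]
  field_simp
  ring

theorem meromorphicOrderAt_q₂_nonneg_of_pole_p₁ [NeZero (2 : 𝕜)]
    (h : IsSasanoGerm κ α₀ α₁ q₁ p₁ q₂ p₂) (hp₁ : meromorphicOrderAt p₁ 0 < 0)
    (hp₂ : 0 ≤ meromorphicOrderAt p₂ 0) : 0 ≤ meromorphicOrderAt q₂ 0 := by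
  by_contra! hq₂
  obtain ⟨c, hc⟩ := tendsto_nhds_of_meromorphicOrderAt_nonneg h.meromorphicAt_q₁
    (h.meromorphicOrderAt_q₁_nonneg_of_pole_p₁ hp₁ hp₂)
  obtain ⟨y, hy⟩ := tendsto_nhds_of_meromorphicOrderAt_nonneg h.meromorphicAt_p₂ hp₂
  obtain ⟨s, hs⟩ := h.exists_tendsto_sum_of_pole_p₁ hp₁ hc
  obtain ⟨v, hv⟩ := h.exists_tendsto_q₂_mul_p₂_of_tendsto_sum hs hy
  have hinv := tendsto_inv_zero_of_meromorphicOrderAt_neg hq₂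
  have hp₂_zero : Tendsto p₂ (𝓝[≠] 0) (𝓝 0) :=
    tendsto_zero_of_tendsto_mul_of_meromorphicOrderAt_neg hq₂ (hv.congr fun t => mul_comm _ _)
  have htp₁ := h.tendsto_mul_p₁_zero hp₁ hp₂_zero ((hs.sub hv).congr fun t => by ring)
  have hX := ((hs.const_mul 2).add_const κ).sub_const 0
  have hone := h.symm.tendsto_mul_p₂_div_q₁_sq hq₂ (a := 0)
    (hX.congr fun t => by ring)
  have := tendsto_nhds_unique hone ((htp₁.const_mul 4).mul (hinv.pow 2))
  simp at this

theorem meromorphicOrderAt_p₁_eq_neg_one [NeZero (2 : 𝕜)] (h : IsSasanoGerm κ α₀ α₁ q₁ p₁ q₂ p₂)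
    (hp₁ : meromorphicOrderAt p₁ 0 < 0) (hp₂ : 0 ≤ meromorphicOrderAt p₂ 0) :
    meromorphicOrderAt p₁ 0 = -1 := by
  obtain ⟨c, hc⟩ := tendsto_nhds_of_meromorphicOrderAt_nonneg h.meromorphicAt_q₁
    (h.meromorphicOrderAt_q₁_nonneg_of_pole_p₁ hp₁ hp₂)
  obtain ⟨d, hd⟩ := tendsto_nhds_of_meromorphicOrderAt_nonneg h.meromorphicAt_q₂
    (h.meromorphicOrderAt_q₂_nonneg_of_pole_p₁ hp₁ hp₂)
  obtain ⟨s, hs⟩ := h.exists_tendsto_sum_of_pole_p₁ hp₁ hc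
  exact meromorphicOrderAt_eq_neg_one_of_tendsto hp₁ (by
    simpa only [sub_zero] using h.symm.tendsto_mul_p₂ hd (by simpa only [add_comm] using hs))

end IsSasanoGerm

theorem sasano_pole_structure_at_zero_general {𝕜 : Type*} [NontriviallyNormedField 𝕜]
    [CompleteSpace 𝕜] [NeZero (2 : 𝕜)] {κ α₀ α₁ : 𝕜} {q₁ p₁ q₂ p₂ : 𝕜 → 𝕜}
    (h : IsSasanoGerm κ α₀ α₁ q₁ p₁ q₂ p₂) :
    (0 ≤ meromorphicOrderAt q₁ 0 ∧ 0 ≤ meromorphicOrderAt p₁ 0 ∧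
      0 ≤ meromorphicOrderAt q₂ 0 ∧ 0 ≤ meromorphicOrderAt p₂ 0) ∨
    (meromorphicOrderAt p₁ 0 = -1 ∧ 0 ≤ meromorphicOrderAt q₁ 0 ∧
      0 ≤ meromorphicOrderAt q₂ 0 ∧ 0 ≤ meromorphicOrderAt p₂ 0) ∨
    (meromorphicOrderAt p₂ 0 = -1 ∧ 0 ≤ meromorphicOrderAt q₁ 0 ∧
      0 ≤ meromorphicOrderAt p₁ 0 ∧ 0 ≤ meromorphicOrderAt q₂ 0) := by
  rcases lt_or_ge (meromorphicOrderAt p₁ 0) 0 with hp₁ | hp₁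
  · have hp₂ := h.meromorphicOrderAt_p₂_nonneg_of_pole_p₁ hp₁
    exact .inr (.inl ⟨h.meromorphicOrderAt_p₁_eq_neg_one hp₁ hp₂,
      h.meromorphicOrderAt_q₁_nonneg_of_pole_p₁ hp₁ hp₂,
      h.meromorphicOrderAt_q₂_nonneg_of_pole_p₁ hp₁ hp₂, hp₂⟩)
  rcases lt_or_ge (meromorphicOrderAt p₂ 0) 0 with hp₂ | hp₂
  · exact .inr (.inr ⟨h.symm.meromorphicOrderAt_p₁_eq_neg_one hp₂ hp₁,
      h.symm.meromorphicOrderAt_q₂_nonneg_of_pole_p₁ hp₂ hp₁, hp₁,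
      h.symm.meromorphicOrderAt_q₁_nonneg_of_pole_p₁ hp₂ hp₁⟩)
  · exact .inl ⟨h.meromorphicOrderAt_q₁_nonneg hp₁ hp₂, hp₁,
      h.symm.meromorphicOrderAt_q₁_nonneg hp₂ hp₁, hp₂⟩

theorem meromorphicAt_evR (f : RatFunc ℂ) (c : ℂ) : MeromorphicAt (evR f) c :=
  (AnalyticAt.aeval_polynomial analyticAt_id f.num).meromorphicAt.div
    (AnalyticAt.aeval_polynomial analyticAt_id f.denom).meromorphicAt

theorem eventually_noPoleAt (f : RatFunc ℂ) (c : ℂ) : ∀ᶠ t in 𝓝[≠] c, NoPoleAt f t := by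
  have hroots := (finite_setOfPred_isRoot f.denom_ne_zero).eventually_cofinite_notMem
  exact hroots.filter_mono (nhdsNE_le_cofinite c)

theorem noPoleAt_iff {f : RatFunc ℂ} {c : ℂ} :
    NoPoleAt f c ↔ 0 ≤ meromorphicOrderAt (evR f) c := by
  refine ⟨fun hc => ((AnalyticAt.aeval_polynomial analyticAt_id f.num).div
    (AnalyticAt.aeval_polynomial analyticAt_id f.denom) hc).meromorphicOrderAt_nonneg,
    fun hord hdenom => ?_⟩
  obtain ⟨y, hy⟩ := tendsto_nhds_of_meromorphicOrderAt_nonneg (meromorphicAt_evR f c) hord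
  have hprod := hy.mul (f.denom.continuous.continuousAt.tendsto.mono_left nhdsWithin_le_nhds)
  have hnum : f.num.eval c = 0 := by
    rw [hdenom, mul_zero] at hprod
    refine tendsto_nhds_unique_of_eventuallyEq
      (f.num.continuous.continuousAt.tendsto.mono_left nhdsWithin_le_nhds) hprod ?_
    filter_upwards [eventually_noPoleAt f c] with t ht
    exact (div_mul_cancel₀ _ ht).symm
  obtain ⟨a, b, hab⟩ := f.isCoprime_num_denom
  simpa [hnum, hdenom] using congrArg (eval c) hab

theorem simplePoleAt_iff {f : RatFunc ℂ} {c : ℂ} :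
    SimplePoleAt f c ↔ meromorphicOrderAt (evR f) c = -1 :=
  (meromorphicOrderAt_eq_neg_one_iff (meromorphicAt_evR f c)).symm

theorem IsSasanoSol.isSasanoGerm {a0 a1 a3 : ℂ} {q1 p1 q2 p2 : RatFunc ℂ}
    (h : IsSasanoSol a0 a1 a3 q1 p1 q2 p2) :
    IsSasanoGerm (a0 + a1 + a3) a0 a1 (evR q1) (evR p1) (evR q2) (evR p2) := by
  have heqs := (eventually_noPoleAt q1 0).and <| (eventually_noPoleAt p1 0).and <|
    (eventually_noPoleAt q2 0).and (eventually_noPoleAt p2 0)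
  have heqs := heqs.mono fun t ht => h t ht.1 ht.2.1 ht.2.2.1 ht.2.2.2
  exact ⟨meromorphicAt_evR q1 0, meromorphicAt_evR p1 0, meromorphicAt_evR q2 0,
    meromorphicAt_evR p2 0, heqs.mono fun _ ht => ht.1, heqs.mono fun _ ht => ht.2.1,
    heqs.mono fun _ ht => ht.2.2.1, heqs.mono fun _ ht => ht.2.2.2⟩

theorem sasano_pole_structure_at_zero (a0 a1 a2 a3 : ℂ)
    (hpar : a0 + a1 + 2 * a2 + a3 = 1 / 2)
    (q1 p1 q2 p2 : RatFunc ℂ)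
    (hsol : IsSasanoSol a0 a1 a3 q1 p1 q2 p2) :
    (NoPoleAt q1 0 ∧ NoPoleAt p1 0 ∧ NoPoleAt q2 0 ∧ NoPoleAt p2 0) ∨
    (SimplePoleAt p1 0 ∧ NoPoleAt q1 0 ∧ NoPoleAt q2 0 ∧ NoPoleAt p2 0) ∨
    (SimplePoleAt p2 0 ∧ NoPoleAt q1 0 ∧ NoPoleAt p1 0 ∧ NoPoleAt q2 0) := by
  simpa only [noPoleAt_iff, simplePoleAt_iff] using
    sasano_pole_structure_at_zero_general hsol.isSasanoGerm
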